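/- arXiv:1502.02799 — 3 statements merged into one kernel-verified Lean document; each statement's English description precedes it below -/
import Mathlib

section
/- Let V ⊆ 𝒜 and Σ be a CNF theory. If a partition {Q,H} of Var(ren(Σ,V)) satisfies the QH-conditions for every clause of ren(Σ,V), then {Q,H} satisfies the QH-conditions for every clause of res^n_{ren(Σ,V)} for every n ≥ 0. -/
variable {α : Type*} [Fintype α] [DecidableEq α]

/-- A clause (or term): a finite set of literals, where a literal is an atom
paired with a polarity (`true` = positive occurrence, `false` = negated). -/
abbrev Clause (α : Type*) := Finset (α × Bool)

/-- A finite set of literals is a legal clause/term if it contains no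
complementary pair of literals. -/
def IsClause (c : Clause α) : Prop := ∀ p : α, ¬((p, true) ∈ c ∧ (p, false) ∈ c)

instance : DecidablePred (IsClause (α := α)) := fun c =>
  decidable_of_iff (∀ p : α, ¬((p, true) ∈ c ∧ (p, false) ∈ c)) Iff.rfl

/-- The atoms occurring in a clause/term. -/
def varsC (c : Clause α) : Finset α := c.image Prod.fst

/-- The atoms occurring positively in a clause/term. -/
def posC (c : Clause α) : Finset α := (c.filter fun l => l.2 = true).image Prod.fst

/-- The atoms occurring negatively in a clause/term. -/
def negC (c : Clause α) : Finset α := (c.filter fun l => l.2 = false).image Prod.fst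

/-- The resolvent of two clauses on atom `p`. -/
def res (c c' : Clause α) (p : α) : Clause α :=
  (c ∪ c') \ ({(p, true), (p, false)} : Finset (α × Bool))

/-- `c` and `c'` are resolvable on atom `p`: `p` occurs in one of them and `¬p` in
the other, and the resolvent contains no complementary pair of literals. -/
def ResolvableOn (c c' : Clause α) (p : α) : Prop :=
  ((p, true) ∈ c ∧ (p, false) ∈ c' ∨ (p, false) ∈ c ∧ (p, true) ∈ c') ∧ IsClause (res c c' p)

/-- Renaming of a literal: flip the polarity of atoms in `V`. -/
def renLit (V : Finset α) (l : α × Bool) : α × Bool := if l.1 ∈ V then (l.1, !l.2) else l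

/-- Renaming of a clause w.r.t. the atoms in `V`. -/
def renClause (V : Finset α) (c : Clause α) : Clause α := c.image (renLit V)

/-- Renaming of a CNF theory w.r.t. the atoms in `V`. -/
def renTheory (V : Finset α) (T : Finset (Clause α)) : Finset (Clause α) := T.image (renClause V)

/-- A Horn clause: at most one positive literal. -/
def HornClause (c : Clause α) : Prop := (posC c).card ≤ 1

/-- A Horn theory: a finite set of Horn clauses. -/
def IsHornTheory (T : Finset (Clause α)) : Prop := ∀ c ∈ T, HornClause c

/-- A Krom theory: each clause contains at most 2 literals. -/
def IsKromTheory (T : Finset (Clause α)) : Prop := ∀ c ∈ T, c.card ≤ 2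

/-- `T` is Horn renamable: some renaming of `T` is a Horn theory. -/
def IsRenHorn (T : Finset (Clause α)) : Prop := ∃ V : Finset α, IsHornTheory (renTheory V T)

/-- The QH-conditions for sets of atoms `Q`, `H` and a clause `c`. -/
def QHcond (Q H : Finset α) (c : Clause α) : Prop :=
  (varsC c ∩ Q).card ≤ 2 ∧ (posC c ∩ H).card ≤ 1 ∧
    ((posC c ∩ H).card = 1 → varsC c ∩ Q = ∅)

/-- The atoms occurring in a CNF theory. -/
def varsT (T : Finset (Clause α)) : Finset α := T.sup varsC

/-- `T` has a QH-partition: a partition `{Q, H}` of its atoms satisfying the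
QH-conditions for each of its clauses. -/
def HasQHPartition (T : Finset (Clause α)) : Prop :=
  ∃ Q H : Finset α, Q ∩ H = ∅ ∧ Q ∪ H = varsT T ∧ ∀ c ∈ T, QHcond Q H c

/-- `T` is q-Horn: some renaming of `T` has a QH-partition. -/
def IsQHorn (T : Finset (Clause α)) : Prop := ∃ V : Finset α, HasQHPartition (renTheory V T)

/-- Satisfaction of a literal by an interpretation (a set of atoms). -/
def litSat (I : Set α) (l : α × Bool) : Prop := if l.2 then l.1 ∈ I else l.1 ∉ I

/-- Satisfaction of a clause (read disjunctively). -/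
def clauseSat (I : Set α) (c : Clause α) : Prop := ∃ l ∈ c, litSat I l

/-- Satisfaction of a term (read conjunctively). -/
def termSat (I : Set α) (t : Clause α) : Prop := ∀ l ∈ t, litSat I l

/-- Satisfaction of a CNF theory. -/
def cnfSat (I : Set α) (T : Finset (Clause α)) : Prop := ∀ c ∈ T, clauseSat I c

/-- One step of the resolution closure. -/
def resStep (S : Set (Clause α)) : Set (Clause α) :=
  S ∪ {d | ∃ c ∈ S, ∃ c' ∈ S, ∃ p : α, ResolvableOn c c' p ∧ d = res c c' p}

/-- The iterated resolution closure `res^n_T`. -/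
def resIter (T : Finset (Clause α)) : ℕ → Set (Clause α)
  | 0 => (↑T : Set (Clause α))
  | n + 1 => resStep (resIter T n)

/-- Propositional formulas over atoms `α`. -/
inductive PropForm (α : Type*) where
  | var : α → PropForm α
  | tru : PropForm α
  | fls : PropForm α
  | neg : PropForm α → PropForm α
  | conj : PropForm α → PropForm α → PropForm α
  | disj : PropForm α → PropForm α → PropForm α

namespace PropForm

/-- Satisfaction of a formula by an interpretation. -/
def Sat (I : Set α) : PropForm α → Prop
  | var p => p ∈ I
  | tru => True
  | fls => False
  | neg φ => ¬ Sat I φ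
  | conj φ ψ => Sat I φ ∧ Sat I ψ
  | disj φ ψ => Sat I φ ∨ Sat I ψ

/-- Logical equivalence: same models. -/
def equivalent (φ ψ : PropForm α) : Prop := ∀ I : Set α, Sat I φ ↔ Sat I ψ

/-- Entailment: every model of `φ` is a model of `ψ`. -/
def entails (φ ψ : PropForm α) : Prop := ∀ I : Set α, Sat I φ → Sat I ψ

/-- The atoms occurring in a formula. -/
def vars : PropForm α → Finset α
  | var p => {p}
  | tru => ∅
  | fls => ∅
  | neg φ => vars φ
  | conj φ ψ => vars φ ∪ vars ψ
  | disj φ ψ => vars φ ∪ vars ψ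

/-- Substitution of the formula `χ` for the atom `p`. -/
def subst (p : α) (χ : PropForm α) : PropForm α → PropForm α
  | var q => if q = p then χ else var q
  | tru => tru
  | fls => fls
  | neg φ => neg (subst p χ φ)
  | conj φ ψ => conj (subst p χ φ) (subst p χ ψ)
  | disj φ ψ => disj (subst p χ φ) (subst p χ ψ)

/-- Forgetting a single atom: `Forget(φ, {p}) = φ[p/⊤] ∨ φ[p/⊥]`. -/
def forget1 (φ : PropForm α) (p : α) : PropForm α := disj (subst p tru φ) (subst p fls φ)

/-- Forgetting a set of atoms (presented as a list), one atom at a time: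
`Forget(φ, ∅) = φ` and `Forget(φ, V ∪ {p}) = Forget(Forget(φ, {p}), V)`. -/
def Forget : PropForm α → List α → PropForm α
  | φ, [] => φ
  | φ, p :: V => Forget (forget1 φ p) V

/-- Renaming of a formula: replace each occurrence of an atom `p ∈ V` by `¬p`. -/
def renForm (V : Finset α) : PropForm α → PropForm α
  | var p => if p ∈ V then neg (var p) else var p
  | tru => tru
  | fls => fls
  | neg φ => neg (renForm V φ)
  | conj φ ψ => conj (renForm V φ) (renForm V ψ)
  | disj φ ψ => disj (renForm V φ) (renForm V ψ)

/-- `φ` is irrelevant to the atoms in `V`: it is equivalent to a formula not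
mentioning any atom of `V`. -/
def IR (φ : PropForm α) (V : List α) : Prop :=
  ∃ φ' : PropForm α, equivalent φ φ' ∧ ∀ p ∈ V, p ∉ vars φ'

end PropForm

/-- The formula corresponding to a literal. -/
def litToForm (l : α × Bool) : PropForm α :=
  if l.2 then PropForm.var l.1 else PropForm.neg (PropForm.var l.1)

/-- The disjunction of the literals of a clause. -/
noncomputable def clauseToForm (c : Clause α) : PropForm α :=
  c.toList.foldr (fun l φ => PropForm.disj (litToForm l) φ) PropForm.fls

/-- The conjunction of the clauses of a CNF theory. -/
noncomputable def cnfToForm (T : Finset (Clause α)) : PropForm α :=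
  T.toList.foldr (fun c φ => PropForm.conj (clauseToForm c) φ) PropForm.tru

/-- `φ` is Horn expressible. -/
def HornExpressible (φ : PropForm α) : Prop :=
  ∃ T : Finset (Clause α), (∀ c ∈ T, IsClause c) ∧ IsHornTheory T ∧
    PropForm.equivalent φ (cnfToForm T)

/-- `φ` is Krom expressible. -/
def KromExpressible (φ : PropForm α) : Prop :=
  ∃ T : Finset (Clause α), (∀ c ∈ T, IsClause c) ∧ IsKromTheory T ∧
    PropForm.equivalent φ (cnfToForm T)

/-- `φ` is renamable-Horn expressible. -/
def RenHornExpressible (φ : PropForm α) : Prop :=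
  ∃ T : Finset (Clause α), (∀ c ∈ T, IsClause c) ∧ IsRenHorn T ∧
    PropForm.equivalent φ (cnfToForm T)

/-- `φ` is q-Horn expressible. -/
def QHornExpressible (φ : PropForm α) : Prop :=
  ∃ T : Finset (Clause α), (∀ c ∈ T, IsClause c) ∧ IsQHorn T ∧
    PropForm.equivalent φ (cnfToForm T)

/-- A formula entails a clause. -/
def EntailsClause (φ : PropForm α) (c : Clause α) : Prop :=
  ∀ I : Set α, PropForm.Sat I φ → clauseSat I c

/-- A prime implicate of a formula. -/
def IsPrimeImplicate (φ : PropForm α) (c : Clause α) : Prop :=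
  IsClause c ∧ EntailsClause φ c ∧ ∀ c' ⊂ c, ¬ EntailsClause φ c'

/-- A term entails a formula. -/
def TermEntails (t : Clause α) (φ : PropForm α) : Prop :=
  ∀ I : Set α, termSat I t → PropForm.Sat I φ

/-- A prime implicant of a formula. -/
def IsPrimeImplicant (φ : PropForm α) (t : Clause α) : Prop :=
  IsClause t ∧ TermEntails t φ ∧ ∀ t' ⊂ t, ¬ TermEntails t' φ

/-- A CNF theory entails a clause. -/
def TheoryEntailsClause (T : Finset (Clause α)) (c : Clause α) : Prop :=
  ∀ I : Set α, cnfSat I T → clauseSat I c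

/-- A prime implicate of a CNF theory. -/
def IsPrimeImplicateT (T : Finset (Clause α)) (c : Clause α) : Prop :=
  IsClause c ∧ TheoryEntailsClause T c ∧ ∀ c' ⊂ c, ¬ TheoryEntailsClause T c'

/-- The set of prime implicates of a CNF theory, as a finite theory. -/
noncomputable def PI (T : Finset (Clause α)) : Finset (Clause α) :=
  (Set.toFinite {c : Clause α | IsPrimeImplicateT T c}).toFinset

/-- Strong unfolding of a CNF theory w.r.t. an atom `p`: keep the clauses not
mentioning `p`, and replace the clauses containing the positive literal `p` by all
their resolvents with clauses containing `¬p`; clauses containing `¬p` are removed. -/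
def unfold1 (T : Finset (Clause α)) (p : α) : Finset (Clause α) :=
  T.filter (fun c => (p, true) ∉ c ∧ (p, false) ∉ c) ∪
    ((T ×ˢ T).filter fun cc =>
        (p, true) ∈ cc.1 ∧ (p, false) ∈ cc.2 ∧ IsClause (res cc.1 cc.2 p)).image
      fun cc => res cc.1 cc.2 p

/-- Iterated strong unfolding w.r.t. a set of atoms (presented as a list):
`unfold(T, ∅) = T` and `unfold(T, V ∪ {p}) = unfold(unfold(T, p), V)`. -/
def unfoldList (T : Finset (Clause α)) : List α → Finset (Clause α)
  | [] => T
  | p :: V => unfoldList (unfold1 T p) V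

theorem mem_varsC_iff (c : Clause α) (a : α) :
    a ∈ varsC c ↔ (a, true) ∈ c ∨ (a, false) ∈ c := by
  simp [varsC, or_comm]

theorem mem_posC_iff (c : Clause α) (a : α) : a ∈ posC c ↔ (a, true) ∈ c := by
  simp [posC]

theorem varsC_res (c c' : Clause α) (p : α) :
    varsC (res c c' p) = (varsC c).erase p ∪ (varsC c').erase p := by
  ext a
  simp only [mem_varsC_iff, res, Finset.mem_union, Finset.mem_sdiff, Finset.mem_insert,
    Finset.mem_singleton, Prod.mk.injEq, Finset.mem_erase]
  grind

theorem posC_res (c c' : Clause α) (p : α) :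
    posC (res c c' p) = (posC c).erase p ∪ (posC c').erase p := by
  ext a
  simp only [mem_posC_iff, res, Finset.mem_union, Finset.mem_sdiff, Finset.mem_insert,
    Finset.mem_singleton, Prod.mk.injEq, Finset.mem_erase]
  grind

theorem res_comm' (c c' : Clause α) (p : α) : res c c' p = res c' c p := by
  simp [res, Finset.union_comm]

/-- Resolving preserves the QH-conditions, with the positive literal in the first clause. -/
theorem QHcond_res (Q H : Finset α) (c c' : Clause α) (p : α)
    (hp : (p, true) ∈ c) (hn : (p, false) ∈ c') (hv : p ∈ Q ∪ H)
    (h : QHcond Q H c) (h' : QHcond Q H c') : QHcond Q H (res c c' p) := by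
  obtain ⟨h1, h2, h3⟩ := h
  obtain ⟨h1', h2', h3'⟩ := h'
  have hpv : p ∈ varsC c := (mem_varsC_iff c p).2 (Or.inl hp)
  have hpv' : p ∈ varsC c' := (mem_varsC_iff c' p).2 (Or.inr hn)
  have hpp : p ∈ posC c := (mem_posC_iff c p).2 hp
  unfold QHcond
  rw [varsC_res, posC_res]
  rcases Finset.mem_union.1 hv with hQ | hH
  · have e0 : posC c ∩ H = ∅ := by
      by_contra hne
      have := Finset.card_pos.2 (Finset.nonempty_iff_ne_empty.2 hne)
      have := h3 (by omega)
      have hm : p ∈ varsC c ∩ Q := Finset.mem_inter.2 ⟨hpv, hQ⟩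
      simp [this] at hm
    have e0' : posC c' ∩ H = ∅ := by
      by_contra hne
      have := Finset.card_pos.2 (Finset.nonempty_iff_ne_empty.2 hne)
      have := h3' (by omega)
      have hm : p ∈ varsC c' ∩ Q := Finset.mem_inter.2 ⟨hpv', hQ⟩
      simp [this] at hm
    have e : ((posC c).erase p ∪ (posC c').erase p) ∩ H = ∅ := by
      rw [Finset.union_inter_distrib_right, Finset.erase_inter, Finset.erase_inter, e0, e0']
      simp
    rw [e]
    refine ⟨?_, by simp, by simp⟩
    rw [Finset.union_inter_distrib_right, Finset.erase_inter, Finset.erase_inter]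
    refine (Finset.card_union_le _ _).trans ?_
    rw [Finset.card_erase_of_mem (Finset.mem_inter.2 ⟨hpv, hQ⟩),
      Finset.card_erase_of_mem (Finset.mem_inter.2 ⟨hpv', hQ⟩)]
    omega
  · have hm : p ∈ posC c ∩ H := Finset.mem_inter.2 ⟨hpp, hH⟩
    have hc := Finset.card_pos.2 ⟨p, hm⟩
    have hq := h3 (by omega)
    have hz : ((posC c ∩ H).erase p) = ∅ := by
      rw [← Finset.card_eq_zero, Finset.card_erase_of_mem hm]
      omega
    have a1 : ((varsC c).erase p ∪ (varsC c').erase p) ∩ Q ⊆ varsC c' ∩ Q := by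
      rw [Finset.union_inter_distrib_right, Finset.erase_inter, Finset.erase_inter, hq]
      simpa using Finset.erase_subset _ _
    have a2 : ((posC c).erase p ∪ (posC c').erase p) ∩ H ⊆ posC c' ∩ H := by
      rw [Finset.union_inter_distrib_right, Finset.erase_inter, Finset.erase_inter, hz]
      simpa using Finset.erase_subset _ _
    have b1 := Finset.card_le_card a1
    have b2 := Finset.card_le_card a2
    refine ⟨by omega, by omega, fun h => ?_⟩
    rw [h3' (by omega)] at a1
    exact Finset.subset_empty.1 a1

/-- If a partition `{Q,H}` of `Var(ren(Σ,V))` satisfies the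
QH-conditions for every clause of `ren(Σ,V)`, then it satisfies the QH-conditions
for every clause of `res^n_{ren(Σ,V)}` for every `n ≥ 0`. -/
theorem qh_partition_preserved_by_resolution_closure
    (S : Finset (Clause α)) (V : Finset α) (Q H : Finset α)
    (hS : ∀ c ∈ S, IsClause c)
    (hdisj : Q ∩ H = ∅) (hpart : Q ∪ H = varsT (renTheory V S))
    (hQH : ∀ c ∈ renTheory V S, QHcond Q H c) :
    ∀ n : ℕ, ∀ c ∈ resIter (renTheory V S) n, QHcond Q H c := by
  have key : ∀ n : ℕ, ∀ c ∈ resIter (renTheory V S) n, QHcond Q H c ∧ varsC c ⊆ Q ∪ H := by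
    intro n
    induction n with
    | zero =>
      intro c hc
      have hc' : c ∈ renTheory V S := hc
      refine ⟨hQH c hc', ?_⟩
      rw [hpart]
      exact Finset.le_sup (f := varsC) hc'
    | succ n ih =>
      intro d hd
      rcases hd with hd | ⟨c, hc, c', hc', p, ⟨hr, -⟩, rfl⟩
      · exact ih d hd
      · obtain ⟨q, v⟩ := ih c hc
        obtain ⟨q', v'⟩ := ih c' hc'
        refine ⟨?_, ?_⟩
        · rcases hr with ⟨x, y⟩ | ⟨x, y⟩
          · exact QHcond_res Q H c c' p x y (v ((mem_varsC_iff c p).2 (Or.inl x))) q q'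
          · rw [res_comm']
            exact QHcond_res Q H c' c p y x (v ((mem_varsC_iff c p).2 (Or.inr x))) q' q
        · rw [varsC_res]
          exact Finset.union_subset ((Finset.erase_subset _ _).trans v)
            ((Finset.erase_subset _ _).trans v')
  exact fun n c hc => (key n c hc).1
end

section
/- Let Π and Σ be propositional theories and V a set of atoms. Then Σ ≡ Forget(Π, V) if and only if Σ is equivalent to the conjunction of all prime implicates c of Π with Var(c) ∩ V = ∅. -/
variable {α : Type*} [Fintype α] [DecidableEq α]

theorem sat_subst_tru (p : α) (I : Set α) (φ : PropForm α) :
    PropForm.Sat I (PropForm.subst p PropForm.tru φ) ↔ PropForm.Sat (insert p I) φ := by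
  induction φ with
  | var q => by_cases h : q = p <;> simp [PropForm.subst, PropForm.Sat, h]
  | tru => simp [PropForm.subst, PropForm.Sat]
  | fls => simp [PropForm.subst, PropForm.Sat]
  | neg φ ih => simp [PropForm.subst, PropForm.Sat, ih]
  | conj φ ψ ih1 ih2 => simp [PropForm.subst, PropForm.Sat, ih1, ih2]
  | disj φ ψ ih1 ih2 => simp [PropForm.subst, PropForm.Sat, ih1, ih2]

theorem sat_subst_fls (p : α) (I : Set α) (φ : PropForm α) :
    PropForm.Sat I (PropForm.subst p PropForm.fls φ) ↔ PropForm.Sat (I \ {p}) φ := by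
  induction φ with
  | var q => by_cases h : q = p <;> simp [PropForm.subst, PropForm.Sat, h]
  | tru => simp [PropForm.subst, PropForm.Sat]
  | fls => simp [PropForm.subst, PropForm.Sat]
  | neg φ ih => simp [PropForm.subst, PropForm.Sat, ih]
  | conj φ ψ ih1 ih2 => simp [PropForm.subst, PropForm.Sat, ih1, ih2]
  | disj φ ψ ih1 ih2 => simp [PropForm.subst, PropForm.Sat, ih1, ih2]

theorem sat_forget1 (p : α) (I : Set α) (φ : PropForm α) :
    PropForm.Sat I (PropForm.forget1 φ p) ↔
      ∃ J : Set α, PropForm.Sat J φ ∧ ∀ q, q ≠ p → (q ∈ J ↔ q ∈ I) := by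
  simp only [PropForm.forget1, PropForm.Sat, sat_subst_tru, sat_subst_fls]
  constructor
  · rintro (h | h)
    · exact ⟨_, h, fun q hq => by simp [hq]⟩
    · exact ⟨_, h, fun q hq => by simp [hq]⟩
  · rintro ⟨J, hJ, h⟩
    by_cases hp : p ∈ J
    · left
      have : insert p I = J := by
        ext q
        by_cases hq : q = p
        · simp [hq, hp]
        · simp [hq, h q hq]
      rwa [this]
    · right
      have : I \ {p} = J := by
        ext q
        by_cases hq : q = p
        · simp [hq, hp]
        · simp [hq, h q hq]
      rwa [this]

theorem sat_Forget (V : List α) (I : Set α) (φ : PropForm α) :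
    PropForm.Sat I (PropForm.Forget φ V) ↔
      ∃ J : Set α, PropForm.Sat J φ ∧ ∀ q, q ∉ V → (q ∈ J ↔ q ∈ I) := by
  induction V generalizing φ with
  | nil =>
    simp only [PropForm.Forget]
    constructor
    · intro h
      exact ⟨I, h, fun _ _ => Iff.rfl⟩
    · rintro ⟨J, hJ, h⟩
      have : J = I := by
        ext q
        exact h q (by simp)
      rwa [← this]
  | cons p V ih =>
    simp only [PropForm.Forget, ih, sat_forget1]
    constructor
    · rintro ⟨J, ⟨K, hK, h1⟩, h2⟩
      refine ⟨K, hK, fun q hq => ?_⟩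
      simp only [List.mem_cons, not_or] at hq
      exact (h1 q hq.1).trans (h2 q hq.2)
    · rintro ⟨K, hK, h⟩
      refine ⟨{q | (q = p ∧ q ∈ I) ∨ (q ≠ p ∧ q ∈ K)}, ⟨K, hK, fun q hq => by simp [hq]⟩, ?_⟩
      intro q hq
      by_cases hqp : q = p
      · simp [hqp]
      · simp [hqp, h q (by simp [hqp, hq])]

theorem exists_prime_sub (φ : PropForm α) (c : Clause α) (hc : IsClause c)
    (h : EntailsClause φ c) : ∃ d ⊆ c, IsPrimeImplicate φ d := by
  induction c using Finset.strongInduction with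
  | H c ih =>
    by_cases hm : ∃ c' ⊂ c, EntailsClause φ c'
    · obtain ⟨c', hs, he⟩ := hm
      obtain ⟨d, hd, hp⟩ := ih c' hs (fun p hp => hc p ⟨hs.1 hp.1, hs.1 hp.2⟩) he
      exact ⟨d, hd.trans hs.1, hp⟩
    · exact ⟨c, subset_rfl, hc, h, fun c' hs he => hm ⟨c', hs, he⟩⟩

theorem sat_Forget_iff_prime (P : PropForm α) (V : List α) (I : Set α) :
    PropForm.Sat I (PropForm.Forget P V) ↔
      ∀ c : Clause α, IsPrimeImplicate P c → (∀ p ∈ V, p ∉ varsC c) → clauseSat I c := by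
  classical
  rw [sat_Forget]
  constructor
  · rintro ⟨J, hJ, h⟩ c hc hV
    obtain ⟨l, hl, hs⟩ := hc.2.1 J hJ
    refine ⟨l, hl, ?_⟩
    have hlV : l.1 ∉ V := fun hm => hV _ hm (Finset.mem_image_of_mem _ hl)
    simpa [litSat, h _ hlV] using hs
  · intro h
    by_contra hno
    let c0 : Clause α := Finset.univ.filter fun l => l.1 ∉ V ∧ ¬ litSat I l
    have hmem : ∀ l, l ∈ c0 ↔ l.1 ∉ V ∧ ¬ litSat I l := fun l =>
      Finset.mem_filter.trans (and_iff_right (Finset.mem_univ l))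
    have hc0 : IsClause c0 := by
      rintro p ⟨h1, h2⟩
      rw [hmem] at h1 h2
      simp [litSat] at h1 h2
      exact h1.2 h2.2
    have he : EntailsClause P c0 := by
      intro J hJ
      by_contra hcs
      refine hno ⟨J, hJ, fun q hq => ?_⟩
      by_contra hne
      by_cases hqI : q ∈ I
      · refine hcs ⟨(q, false), ?_, ?_⟩
        · simp [hmem, litSat, hq, hqI]
        · simp only [litSat]
          simp
          tauto
      · refine hcs ⟨(q, true), ?_, ?_⟩
        · simp [hmem, litSat, hq, hqI]
        · simp only [litSat]
          simp
          tauto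
    obtain ⟨d, hd, hp⟩ := exists_prime_sub P c0 hc0 he
    obtain ⟨l, hl, hs⟩ := h d hp (by
      intro p hpV hpd
      obtain ⟨l, hl, rfl⟩ := Finset.mem_image.1 hpd
      exact ((hmem _).1 (hd hl)).1 hpV)
    exact ((hmem _).1 (hd hl)).2 hs

/-- `Σ ≡ Forget(Π, V)` iff `Σ` is equivalent to the conjunction of
all prime implicates `c` of `Π` with `Var(c) ∩ V = ∅`. -/
theorem equiv_forget_iff_conjunction_of_prime_implicates
    (P S : PropForm α) (V : List α) :
    PropForm.equivalent S (PropForm.Forget P V) ↔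
      ∀ I : Set α, PropForm.Sat I S ↔
        ∀ c : Clause α, IsPrimeImplicate P c → (∀ p ∈ V, p ∉ varsC c) →
          clauseSat I c := by
  simp only [PropForm.equivalent, sat_Forget_iff_prime]
end

section
/- Let Π be a CNF theory and p, q two atoms. Then unfold(unfold(Π, p), q) ≡ unfold(unfold(Π, q), p). -/
variable {α : Type*} [Fintype α] [DecidableEq α]

theorem sat_clauseToForm (I : Set α) (c : Clause α) :
    PropForm.Sat I (clauseToForm c) ↔ clauseSat I c := by
  have h : ∀ L : List (α × Bool),
      PropForm.Sat I (L.foldr (fun l φ => PropForm.disj (litToForm l) φ) PropForm.fls) ↔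
        ∃ l ∈ L, litSat I l := by
    intro L
    induction L with
    | nil => simp [PropForm.Sat]
    | cons a L ih =>
      have ha : PropForm.Sat I (litToForm a) ↔ litSat I a := by
        rcases a with ⟨a, b⟩
        cases b <;> simp [litToForm, litSat, PropForm.Sat]
      simp only [List.foldr_cons, PropForm.Sat, ih, ha, List.mem_cons, exists_eq_or_imp]
  simpa [clauseToForm, clauseSat] using h c.toList

theorem sat_cnfToForm (I : Set α) (T : Finset (Clause α)) :
    PropForm.Sat I (cnfToForm T) ↔ cnfSat I T := by
  have h : ∀ L : List (Clause α),
      PropForm.Sat I (L.foldr (fun c φ => PropForm.conj (clauseToForm c) φ) PropForm.tru) ↔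
        ∀ c ∈ L, clauseSat I c := by
    intro L
    induction L with
    | nil => simp [PropForm.Sat]
    | cons a L ih =>
      simp only [List.foldr_cons, PropForm.Sat, ih, sat_clauseToForm, List.mem_cons,
        forall_eq_or_imp]
  simpa [cnfToForm, cnfSat] using h T.toList

theorem mem_unfold1 (T : Finset (Clause α)) (p : α) (d : Clause α) :
    d ∈ unfold1 T p ↔ (d ∈ T ∧ (p, true) ∉ d ∧ (p, false) ∉ d) ∨
      ∃ c ∈ T, ∃ c' ∈ T, (p, true) ∈ c ∧ (p, false) ∈ c' ∧ IsClause (res c c' p) ∧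
        res c c' p = d := by
  simp only [unfold1, Finset.mem_union, Finset.mem_filter, Finset.mem_image,
    Finset.mem_product, Prod.exists]
  grind

theorem isClause_unfold1 (T : Finset (Clause α)) (hT : ∀ c ∈ T, IsClause c) (p : α) :
    ∀ c ∈ unfold1 T p, IsClause c := by
  intro c hc
  rw [mem_unfold1] at hc
  rcases hc with h | ⟨c, _, c', _, _, _, h, rfl⟩
  · exact hT _ h.1
  · exact h

theorem mem_res (c c' : Clause α) (p : α) (l : α × Bool) :
    l ∈ res c c' p ↔ (l ∈ c ∨ l ∈ c') ∧ l.1 ≠ p := by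
  rcases l with ⟨a, b⟩
  cases b <;> simp [res]

theorem litSat_congr {I J : Set α} {l : α × Bool} (h : l.1 ∈ I ↔ l.1 ∈ J) :
    litSat I l ↔ litSat J l := by
  simp only [litSat, h]

theorem sound_unfold1 (T : Finset (Clause α)) (hT : ∀ c ∈ T, IsClause c) (p : α)
    (I J : Set α) (hIJ : ∀ a, a ≠ p → (a ∈ I ↔ a ∈ J)) (h : cnfSat J T) :
    cnfSat I (unfold1 T p) := by
  intro d hd
  rw [mem_unfold1] at hd
  rcases hd with ⟨hd, h1, h2⟩ | ⟨c, hc, c', hc', h1, h2, -, rfl⟩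
  · obtain ⟨⟨a, b⟩, hl, hs⟩ := h d hd
    refine ⟨(a, b), hl, (litSat_congr (hIJ a ?_)).2 hs⟩
    rintro rfl
    cases b <;> contradiction
  · obtain ⟨⟨a, b⟩, hl, hs⟩ := h c hc
    obtain ⟨⟨a', b'⟩, hl', hs'⟩ := h c' hc'
    by_cases ha : a = p
    · by_cases ha' : a' = p
      · exfalso
        subst ha
        subst ha'
        have e1 := hT c hc a'
        have e2 := hT c' hc' a'
        cases b <;> cases b' <;> simp_all [litSat]
      · exact ⟨(a', b'), (mem_res _ _ _ _).2 ⟨Or.inr hl', ha'⟩,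
          (litSat_congr (hIJ a' ha')).2 hs'⟩
    · exact ⟨(a, b), (mem_res _ _ _ _).2 ⟨Or.inl hl, ha⟩, (litSat_congr (hIJ a ha)).2 hs⟩

theorem cnfSat_unfold1 (T : Finset (Clause α)) (hT : ∀ c ∈ T, IsClause c) (p : α)
    (I : Set α) :
    cnfSat I (unfold1 T p) ↔ cnfSat (insert p I) T ∨ cnfSat (I \ {p}) T := by
  constructor
  · intro h
    by_contra hn
    simp only [cnfSat, not_or, not_forall] at hn
    obtain ⟨⟨c, hc, hcs⟩, ⟨c', hc', hcs'⟩⟩ := hn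
    have hp : (p, true) ∉ c := fun hm => hcs ⟨_, hm, by simp [litSat]⟩
    have hp' : (p, false) ∉ c' := fun hm => hcs' ⟨_, hm, by simp [litSat]⟩
    have k : ∀ l ∈ c, l.1 ≠ p → ¬ litSat I l := fun l hl hlp hs =>
      hcs ⟨l, hl, (litSat_congr (by simp [hlp])).1 hs⟩
    have k' : ∀ l ∈ c', l.1 ≠ p → ¬ litSat I l := fun l hl hlp hs =>
      hcs' ⟨l, hl, (litSat_congr (by simp [hlp])).1 hs⟩
    by_cases hn : (p, false) ∈ c
    · by_cases hn' : (p, true) ∈ c'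
      · have kr : ∀ l ∈ res c' c p, ¬ litSat I l := by
          intro l hl
          rw [mem_res] at hl
          rcases hl with ⟨hl | hl, hlp⟩
          · exact k' l hl hlp
          · exact k l hl hlp
        have hcl : IsClause (res c' c p) := by
          rintro a ⟨h1, h2⟩
          have := kr _ h1
          have := kr _ h2
          simp_all [litSat]
        obtain ⟨l, hl, hs⟩ := h (res c' c p)
          ((mem_unfold1 _ _ _).2 (Or.inr ⟨c', hc', c, hc, hn', hn, hcl, rfl⟩))
        exact kr l hl hs
      · obtain ⟨⟨a, b⟩, hl, hs⟩ := h c' ((mem_unfold1 _ _ _).2 (Or.inl ⟨hc', hn', hp'⟩))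
        refine k' _ hl ?_ hs
        rintro rfl
        cases b <;> contradiction
    · obtain ⟨⟨a, b⟩, hl, hs⟩ := h c ((mem_unfold1 _ _ _).2 (Or.inl ⟨hc, hp, hn⟩))
      refine k _ hl ?_ hs
      rintro rfl
      cases b <;> contradiction
  · rintro (h | h)
    · exact sound_unfold1 T hT p I _ (fun a ha => by simp [ha]) h
    · exact sound_unfold1 T hT p I _ (fun a ha => by simp [ha]) h

/-- `unfold(unfold(Π, p), q) ≡ unfold(unfold(Π, q), p)`. -/
theorem unfold_comm
    (T : Finset (Clause α)) (hT : ∀ c ∈ T, IsClause c) (p q : α) :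
    PropForm.equivalent (cnfToForm (unfold1 (unfold1 T p) q))
      (cnfToForm (unfold1 (unfold1 T q) p)) := by
  by_cases hpq : p = q
  · subst hpq
    exact fun I => Iff.rfl
  intro I
  rw [sat_cnfToForm, sat_cnfToForm,
    cnfSat_unfold1 _ (isClause_unfold1 T hT p), cnfSat_unfold1 _ (isClause_unfold1 T hT q),
    cnfSat_unfold1 T hT, cnfSat_unfold1 T hT, cnfSat_unfold1 T hT, cnfSat_unfold1 T hT]
  have e1 : insert p (insert q I) = insert q (insert p I) := Set.insert_comm _ _ _
  have e2 : insert q I \ {p} = insert q (I \ {p}) := by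
    ext a
    simp only [Set.mem_sdiff, Set.mem_insert_iff, Set.mem_singleton_iff]
    grind
  have e3 : insert p I \ {q} = insert p (I \ {q}) := by
    ext a
    simp only [Set.mem_sdiff, Set.mem_insert_iff, Set.mem_singleton_iff]
    grind
  have e4 : (I \ {p}) \ {q} = (I \ {q}) \ {p} := by
    ext a
    simp only [Set.mem_sdiff, Set.mem_singleton_iff]
    grind
  rw [e1, e2, e3, e4]
  tauto
end
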